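/- Let g : ℝ² → ℝ be the radial convex function g(x) = F(‖x‖). Let X : [0,∞) → ℝ² be continuous, twice continuously differentiable on (0,∞), with X(0) = X₀ ≠ 0 and Ẋ(t) → 0 as t → 0⁺, satisfying Ẍ(t) + (3/t)·Ẋ(t) + ∇g(X(t)) = 0 for all t > 0. Then X(t) stays on the ray through X₀ for all time: there is a continuous function ρ : [0,∞) → ℝ with ρ(0) = 1 such that X(t) = ρ(t)·X₀ for all t ≥ 0. -/

import Mathlib

/-- `F(0) = 0`, `F(r) = ∫₀^r du/(−log u)` for `0 < r ≤ e⁻²`,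
`F(r) = F(e⁻²) + (1/2)(r − e⁻²)` for `r ≥ e⁻²`. -/
noncomputable def F (r : ℝ) : ℝ :=
  if r ≤ Real.exp (-2) then ∫ u in (0:ℝ)..r, 1 / (-Real.log u)
  else (∫ u in (0:ℝ)..Real.exp (-2), 1 / (-Real.log u)) + (1/2) * (r - Real.exp (-2))

/-- The radial potential `g(x) = F(‖x‖)`. -/
noncomputable def gRad (x : EuclideanSpace ℝ (Fin 2)) : ℝ := F ‖x‖

/-!
Along a central force the friction `γ ≥ 0` can only damp the angular momentum, which starts at zero,
so `X ∥ X'` throughout. Wherever `(X, X') ≠ (0, 0)`, let `L` be the line spanned by `X` and `X'`.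
For a unit vector `v`, the squared cosine of the angle between `v` and `L` is
`(⟪v, X⟫² + ⟪v, X'⟫²) / (‖X‖² + ‖X'‖²)`, and its derivative vanishes: the direction of `L` is
constant, even while `X` passes through the centre. The force need not be Lipschitz there, so
`(X, X') ≠ (0, 0)` does not follow from uniqueness for the equation. It follows from the energy
`‖X'‖² / 2 + φ(‖X‖) - φ(0)`, which decays at most at the rate `2γ`: were it zero at some time, it
would be zero at all earlier times.
-/

open Filter Set Topology
open scoped Gradient InnerProductSpace

namespace RadialFlow

section RealFunctions

variable {f f' γ : ℝ → ℝ} {a T t l : ℝ}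

lemma le_of_hasDerivAt_nonpos_of_tendsto (hf : ∀ s > a, HasDerivAt f (f' s) s)
    (hf' : ∀ s > a, f' s ≤ 0) (hlim : Tendsto f (𝓝[>] a) (𝓝 l)) (ht : a < t) : f t ≤ l := by
  have hanti : AntitoneOn f (Ioi a) := by
    apply antitoneOn_of_hasDerivWithinAt_nonpos (f' := f') (convex_Ioi a)
      (fun s hs ↦ (hf s hs).continuousAt.continuousWithinAt) <;> rw [interior_Ioi]
    · exact fun s hs ↦ (hf s hs).hasDerivWithinAt
    · exact hf'
  refine ge_of_tendsto hlim ?_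
  filter_upwards [Ioo_mem_nhdsGT ht] with s hs
  exact hanti hs.1 ht hs.2.le

lemma exists_hasDerivAt_of_continuousOn {G : Type*} [NormedAddCommGroup G] [NormedSpace ℝ G]
    [CompleteSpace G] {h : ℝ → G} {s : Set ℝ} (hs : IsOpen s) (hconn : s.OrdConnected)
    (hh : ContinuousOn h s) : ∃ H : ℝ → G, ∀ r ∈ s, HasDerivAt H (h r) r := by
  rcases s.eq_empty_or_nonempty with rfl | ⟨b, hb⟩
  · simp
  refine ⟨fun r ↦ ∫ u in b..r, h u, fun r hr ↦ ?_⟩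
  exact intervalIntegral.integral_hasDerivAt_right
    (hh.mono (hconn.uIcc_subset hb hr)).intervalIntegrable
    (hh.stronglyMeasurableAtFilter hs r hr) (hh.continuousAt (hs.mem_nhds hr))

lemma nonpos_of_neg_mul_le_hasDerivAt (hγ : ContinuousOn γ (Ioi a))
    (hf : ∀ s > a, HasDerivAt f (f' s) s) (hf' : ∀ s > a, -(γ s * f s) ≤ f' s)
    (ht : a < t) (htT : t ≤ T) (hT : f T ≤ 0) : f t ≤ 0 := by
  obtain ⟨Γ, hΓ⟩ := exists_hasDerivAt_of_continuousOn isOpen_Ioi ordConnected_Ioi hγ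
  have hd (s : ℝ) (hs : a < s) : HasDerivAt (fun s ↦ Real.exp (Γ s) * f s)
      (Real.exp (Γ s) * (γ s * f s + f' s)) s :=
    ((hΓ s hs).exp.mul (hf s hs)).congr_deriv (by ring)
  have hmono : MonotoneOn (fun s ↦ Real.exp (Γ s) * f s) (Ioi a) := by
    apply monotoneOn_of_hasDerivWithinAt_nonneg
      (f' := fun s ↦ Real.exp (Γ s) * (γ s * f s + f' s)) (convex_Ioi a)
      (fun s hs ↦ (hd s hs).continuousAt.continuousWithinAt) <;> rw [interior_Ioi]
    · exact fun s hs ↦ (hd s hs).hasDerivWithinAt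
    · exact fun s hs ↦ mul_nonneg (Real.exp_pos _).le (by linarith [hf' s hs])
  have hle : Real.exp (Γ t) * f t ≤ 0 :=
    (hmono ht (ht.trans_le htT) htT).trans
      (mul_nonpos_of_nonneg_of_nonpos (Real.exp_pos _).le hT)
  exact nonpos_of_mul_nonpos_right hle (Real.exp_pos _)

end RealFunctions

/-- `X`, with velocity `V`, moves on `(0, ∞)` under the friction coefficient `γ t` and the central
force `-c t • X t`, released from rest at `x₀`. The initial data are limits as `t → 0⁺`, and `c` is
arbitrary: for a potential `φ ‖x‖` it is `φ' ‖X t‖ / ‖X t‖`, which may blow up as `X` tends to `0`.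
-/
structure IsDampedCentralMotion {E : Type*} [NormedAddCommGroup E] [NormedSpace ℝ E]
    (γ c : ℝ → ℝ) (x₀ : E) (X V : ℝ → E) : Prop where
  hasDerivAt_position : ∀ t > 0, HasDerivAt X (V t) t
  hasDerivAt_velocity : ∀ t > 0, HasDerivAt V (-(γ t • V t + c t • X t)) t
  tendsto_position : Tendsto X (𝓝[>] 0) (𝓝 x₀)
  tendsto_velocity : Tendsto V (𝓝[>] 0) (𝓝 0)

namespace IsDampedCentralMotion

variable {γ c : ℝ → ℝ} {t : ℝ}

lemma map {E G : Type*} [NormedAddCommGroup E] [NormedSpace ℝ E] [NormedAddCommGroup G]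
    [NormedSpace ℝ G] {x₀ : E} {X V : ℝ → E} (h : IsDampedCentralMotion γ c x₀ X V)
    (ℓ : E →L[ℝ] G) :
    IsDampedCentralMotion γ c (ℓ x₀) (fun t ↦ ℓ (X t)) (fun t ↦ ℓ (V t)) where
  hasDerivAt_position t ht := ℓ.hasFDerivAt.comp_hasDerivAt t (h.hasDerivAt_position t ht)
  hasDerivAt_velocity t ht :=
    (ℓ.hasFDerivAt.comp_hasDerivAt t (h.hasDerivAt_velocity t ht)).congr_deriv (by simp)
  tendsto_position := (ℓ.continuous.tendsto x₀).comp h.tendsto_position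
  tendsto_velocity := map_zero ℓ ▸ (ℓ.continuous.tendsto 0).comp h.tendsto_velocity

section Wronskian

variable {x₀ y₀ : ℝ} {x v y w : ℝ → ℝ}

lemma hasDerivAt_wronskian (hx : IsDampedCentralMotion γ c x₀ x v)
    (hy : IsDampedCentralMotion γ c y₀ y w) (ht : 0 < t) :
    HasDerivAt (fun s ↦ x s * w s - y s * v s) (-(γ t * (x t * w t - y t * v t))) t :=
  (((hx.hasDerivAt_position t ht).mul (hy.hasDerivAt_velocity t ht)).sub
    ((hy.hasDerivAt_position t ht).mul (hx.hasDerivAt_velocity t ht))).congr_deriv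
    (by simp only [smul_eq_mul]; ring)

lemma wronskian_eq_zero (hγ : ∀ s > 0, 0 ≤ γ s) (hx : IsDampedCentralMotion γ c x₀ x v)
    (hy : IsDampedCentralMotion γ c y₀ y w) (ht : 0 < t) : x t * w t - y t * v t = 0 := by
  have hlim : Tendsto (fun s ↦ (x s * w s - y s * v s) ^ 2) (𝓝[>] 0) (𝓝 0) := by
    simpa using ((hx.tendsto_position.mul hy.tendsto_velocity).sub
      (hy.tendsto_position.mul hx.tendsto_velocity)).pow 2
  have hsq : (x t * w t - y t * v t) ^ 2 ≤ 0 := by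
    refine le_of_hasDerivAt_nonpos_of_tendsto (f := fun s ↦ (x s * w s - y s * v s) ^ 2)
      (fun s hs ↦ (hasDerivAt_wronskian hx hy hs).pow 2) (fun s hs ↦ ?_) hlim ht
    have := mul_nonneg (hγ s hs) (sq_nonneg (x s * w s - y s * v s))
    push_cast
    linarith
  exact pow_eq_zero_iff two_ne_zero |>.1 (hsq.antisymm (sq_nonneg _))

end Wronskian

variable {E : Type*} [NormedAddCommGroup E] [InnerProductSpace ℝ E] {x₀ : E} {X V : ℝ → E}

lemma inner_mul_inner_eq (h : IsDampedCentralMotion γ c x₀ X V) (hγ : ∀ s > 0, 0 ≤ γ s)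
    (u v : E) (ht : 0 < t) : ⟪u, X t⟫_ℝ * ⟪v, V t⟫_ℝ = ⟪v, X t⟫_ℝ * ⟪u, V t⟫_ℝ :=
  sub_eq_zero.1 <|
    wronskian_eq_zero hγ (h.map (innerSL ℝ u)) (h.map (innerSL ℝ v)) ht

lemma hasDerivAt_inner_sq_div_norm_sq (h : IsDampedCentralMotion γ c x₀ X V) (hγ : ∀ s > 0, 0 ≤ γ s)
    (v : E) (ht : 0 < t) (hne : ‖X t‖ ^ 2 + ‖V t‖ ^ 2 ≠ 0) :
    HasDerivAt (fun s ↦ (⟪v, X s⟫_ℝ ^ 2 + ⟪v, V s⟫_ℝ ^ 2) / (‖X s‖ ^ 2 + ‖V s‖ ^ 2)) 0 t := by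
  have hv := h.map (innerSL ℝ v)
  have hnum := ((hv.hasDerivAt_position t ht).pow 2).add ((hv.hasDerivAt_velocity t ht).pow 2)
  have hden := (h.hasDerivAt_position t ht).norm_sq.add (h.hasDerivAt_velocity t ht).norm_sq
  have hX := h.inner_mul_inner_eq hγ (X t) v ht
  have hV := h.inner_mul_inner_eq hγ (V t) v ht
  refine (hnum.div hden hne).congr_deriv (div_eq_zero_iff.2 (Or.inl ?_))
  simp only [Pi.add_apply, Pi.pow_apply, innerSL_apply_apply, smul_eq_mul, inner_neg_right,
    inner_add_right, inner_smul_right, real_inner_comm (X t) (V t),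
    real_inner_self_eq_norm_sq] at hX hV ⊢
  push_cast
  linear_combination
    (2 * (1 - c t) * ⟪v, X t⟫_ℝ - 2 * γ t * ⟪v, V t⟫_ℝ) * hX -
      (2 * (1 - c t) * ⟪v, V t⟫_ℝ + 2 * γ t * ⟪v, X t⟫_ℝ) * hV

lemma inner_eq_zero_of_inner_initial_eq_zero (h : IsDampedCentralMotion γ c x₀ X V)
    (hγ : ∀ s > 0, 0 ≤ γ s) (hx₀ : x₀ ≠ 0) (hne : ∀ s > 0, ‖X s‖ ^ 2 + ‖V s‖ ^ 2 ≠ 0) {v : E}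
    (hv : ⟪v, x₀⟫_ℝ = 0) (ht : 0 < t) : ⟪v, X t⟫_ℝ = 0 := by
  have hlim : Tendsto (fun s ↦ (⟪v, X s⟫_ℝ ^ 2 + ⟪v, V s⟫_ℝ ^ 2) / (‖X s‖ ^ 2 + ‖V s‖ ^ 2))
      (𝓝[>] 0) (𝓝 0) := by
    have hnum := ((tendsto_const_nhds (x := v)).inner h.tendsto_position (𝕜 := ℝ)).pow 2 |>.add
      (((tendsto_const_nhds (x := v)).inner h.tendsto_velocity (𝕜 := ℝ)).pow 2)
    have hden := (h.tendsto_position.norm.pow 2).add (h.tendsto_velocity.norm.pow 2)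
    simpa [hv, Pi.div_def] using hnum.div hden (by simpa using hx₀)
  have hcos := le_of_hasDerivAt_nonpos_of_tendsto
    (fun s hs ↦ h.hasDerivAt_inner_sq_div_norm_sq hγ v hs (hne s hs)) (fun _ _ ↦ le_rfl) hlim ht
  have hpos : 0 < ‖X t‖ ^ 2 + ‖V t‖ ^ 2 := (hne t ht).symm.lt_of_le (by positivity)
  have hnum : ⟪v, X t⟫_ℝ ^ 2 + ⟪v, V t⟫_ℝ ^ 2 ≤ 0 := by
    simpa using (div_le_iff₀ hpos).1 hcos
  nlinarith [sq_nonneg ⟪v, V t⟫_ℝ]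

lemma mem_span_initial (h : IsDampedCentralMotion γ c x₀ X V) (hγ : ∀ s > 0, 0 ≤ γ s)
    (hx₀ : x₀ ≠ 0) (hne : ∀ s > 0, ‖X s‖ ^ 2 + ‖V s‖ ^ 2 ≠ 0) (ht : 0 < t) :
    X t ∈ ℝ ∙ x₀ := by
  rw [← Submodule.orthogonal_orthogonal (ℝ ∙ x₀), Submodule.mem_orthogonal]
  intro v hv
  rw [Submodule.mem_orthogonal_singleton_iff_inner_left] at hv
  exact h.inner_eq_zero_of_inner_initial_eq_zero hγ hx₀ hne hv ht

section Energy

variable [CompleteSpace E] {g : E → ℝ}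

lemma hasDerivAt_energy (h : IsDampedCentralMotion γ c x₀ X V) (ht : 0 < t)
    (hg : HasGradientAt g (c t • X t) (X t)) :
    HasDerivAt (fun s ↦ ‖V s‖ ^ 2 / 2 + (g (X s) - g 0)) (-(γ t * ‖V t‖ ^ 2)) t := by
  have hkin := (h.hasDerivAt_velocity t ht).norm_sq.div_const 2
  have hpot := (hg.hasFDerivAt.comp_hasDerivAt t (h.hasDerivAt_position t ht)).sub_const (g 0)
  refine (hkin.add hpot).congr_deriv ?_
  simp only [InnerProductSpace.toDual_apply_apply, inner_neg_right, inner_add_right,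
    inner_smul_right, inner_smul_left, real_inner_self_eq_norm_sq, real_inner_comm (V t) (X t),
    conj_trivial]
  ring

lemma velocity_eq_zero_of_le (h : IsDampedCentralMotion γ c x₀ X V)
    (hγc : ContinuousOn γ (Ioi 0)) (hγ : ∀ s > 0, 0 ≤ γ s) (hgmin : ∀ x, g 0 ≤ g x)
    (hg : ∀ s > 0, HasGradientAt g (c s • X s) (X s)) {T : ℝ} (hXT : X T = 0) (hVT : V T = 0)
    (ht : 0 < t) (htT : t ≤ T) : V t = 0 := by
  have henergy : ‖V t‖ ^ 2 / 2 + (g (X t) - g 0) ≤ 0 := by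
    refine nonpos_of_neg_mul_le_hasDerivAt (γ := fun s ↦ 2 * γ s)
      (f := fun s ↦ ‖V s‖ ^ 2 / 2 + (g (X s) - g 0))
      (continuousOn_const.mul hγc) (fun s hs ↦ h.hasDerivAt_energy hs (hg s hs))
      (fun s hs ↦ ?_) ht htT (by simp [hXT, hVT])
    linarith [mul_nonneg (hγ s hs) (sub_nonneg.2 (hgmin (X s)))]
  have hV : ‖V t‖ ^ 2 ≤ 0 := by linarith [hgmin (X t)]
  exact norm_eq_zero.1 (pow_eq_zero_iff two_ne_zero |>.1 (hV.antisymm (sq_nonneg _)))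

lemma norm_sq_add_norm_sq_ne_zero (h : IsDampedCentralMotion γ c x₀ X V)
    (hγc : ContinuousOn γ (Ioi 0)) (hγ : ∀ s > 0, 0 ≤ γ s) (hgmin : ∀ x, g 0 ≤ g x)
    (hg : ∀ s > 0, HasGradientAt g (c s • X s) (X s)) (hx₀ : x₀ ≠ 0) (ht : 0 < t) :
    ‖X t‖ ^ 2 + ‖V t‖ ^ 2 ≠ 0 := by
  intro hzero
  obtain ⟨hXt, hVt⟩ : X t = 0 ∧ V t = 0 := by
    simpa using (add_eq_zero_iff_of_nonneg (sq_nonneg _) (sq_nonneg _)).1 hzero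
  have hX (s : ℝ) (hs : 0 < s) (hst : s ≤ t) : X s = 0 := by
    rw [← hXt, eq_comm]
    refine constant_of_has_deriv_right_zero (fun r hr ↦
      (h.hasDerivAt_position r (hs.trans_le hr.1)).continuousAt.continuousWithinAt)
      (fun r hr ↦ ?_) t (right_mem_Icc.2 hst)
    have hr0 : 0 < r := hs.trans_le hr.1
    rw [← h.velocity_eq_zero_of_le hγc hγ hgmin hg hXt hVt hr0 hr.2.le]
    exact (h.hasDerivAt_position r hr0).hasDerivWithinAt
  have hlim : Tendsto X (𝓝[>] 0) (𝓝 0) := by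
    refine tendsto_const_nhds.congr' ?_
    filter_upwards [Ioc_mem_nhdsGT ht] with s hs
    exact (hX s hs.1 hs.2).symm
  exact hx₀ (tendsto_nhds_unique h.tendsto_position hlim)

end Energy

end IsDampedCentralMotion

section RadialPotential

variable {E : Type*} [NormedAddCommGroup E] [InnerProductSpace ℝ E] {φ : ℝ → ℝ}

lemma hasFDerivAt_norm {x : E} (hx : x ≠ 0) :
    HasFDerivAt (fun y : E ↦ ‖y‖) (‖x‖⁻¹ • innerSL ℝ x) x := by
  have hn : ‖x‖ ≠ 0 := norm_ne_zero_iff.2 hx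
  have hsqrt := (hasStrictFDerivAt_norm_sq x).hasFDerivAt.sqrt (pow_ne_zero 2 hn)
  simp only [Real.sqrt_sq (norm_nonneg _)] at hsqrt
  refine hsqrt.congr_fderiv ?_
  ext y
  simp only [one_div, mul_inv_rev, smul_apply, innerSL_apply_apply,
    nsmul_eq_mul, Nat.cast_ofNat, smul_eq_mul]
  field_simp

variable [CompleteSpace E]

lemma hasGradientAt_comp_norm {φ' : ℝ} {x : E} (hx : x ≠ 0) (hφ : HasDerivAt φ φ' ‖x‖) :
    HasGradientAt (fun y : E ↦ φ ‖y‖) ((φ' / ‖x‖) • x) x := by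
  rw [hasGradientAt_iff_hasFDerivAt]
  refine (hφ.comp_hasFDerivAt x (hasFDerivAt_norm hx)).congr_fderiv ?_
  ext y
  simp [div_eq_mul_inv, mul_assoc]

lemma hasGradientAt_comp_norm_zero (hφ : HasDerivWithinAt φ 0 (Ici 0) 0) :
    HasGradientAt (fun y : E ↦ φ ‖y‖) 0 0 := by
  have hnorm : Tendsto (fun y : E ↦ ‖y‖) (𝓝 0) (𝓝[≥] 0) :=
    tendsto_nhdsWithin_iff.2 ⟨tendsto_norm_zero, Eventually.of_forall norm_nonneg⟩
  rw [hasGradientAt_iff_hasFDerivAt, hasFDerivAt_iff_isLittleO]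
  rw [← Asymptotics.isLittleO_norm_right]
  simpa [Function.comp_def] using (hasDerivWithinAt_iff_isLittleO.1 hφ).comp_tendsto hnorm

lemma exists_hasGradientAt_comp_norm_smul (hφ : ∀ r > 0, DifferentiableAt ℝ φ r)
    (hφ₀ : HasDerivWithinAt φ 0 (Ici 0) 0) (x : E) :
    ∃ c : ℝ, HasGradientAt (fun y : E ↦ φ ‖y‖) (c • x) x := by
  rcases eq_or_ne x 0 with rfl | hx
  · exact ⟨0, by simpa using hasGradientAt_comp_norm_zero hφ₀⟩
  · exact ⟨_, hasGradientAt_comp_norm hx (hφ _ (norm_pos_iff.2 hx)).hasDerivAt⟩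

end RadialPotential

section Potential

/-- The derivative of `F` on `[0, ∞)`, extended evenly so that it is continuous on all of `ℝ`:
without the absolute value it would blow up at `-1`. Its value at `0` relies on `log 0 = 0` and
`1 / 0 = 0`. -/
noncomputable def derivF (u : ℝ) : ℝ := 1 / (-Real.log (min |u| (Real.exp (-2))))

lemma derivF_zero : derivF 0 = 0 := by
  simp [derivF, (Real.exp_pos _).le]

lemma derivF_of_le {u : ℝ} (hu : 0 ≤ u) (hle : u ≤ Real.exp (-2)) :
    derivF u = 1 / (-Real.log u) := by
  rw [derivF, abs_of_nonneg hu, min_eq_left hle]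

lemma derivF_of_ge {u : ℝ} (hle : Real.exp (-2) ≤ u) : derivF u = 1 / 2 := by
  rw [derivF, min_eq_right (hle.trans (le_abs_self u)), Real.log_exp, neg_neg]

lemma log_min_abs_exp_le {u : ℝ} (hu : u ≠ 0) : Real.log (min |u| (Real.exp (-2))) ≤ -2 :=
  (Real.log_le_iff_le_exp (lt_min (abs_pos.2 hu) (Real.exp_pos _))).2 (min_le_right _ _)

lemma derivF_nonneg (u : ℝ) : 0 ≤ derivF u := by
  rcases eq_or_ne u 0 with rfl | hu
  · exact derivF_zero.ge
  · exact one_div_nonneg.2 (by linarith [log_min_abs_exp_le hu])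

lemma tendsto_derivF_zero : Tendsto derivF (𝓝[≠] 0) (𝓝 0) := by
  have hmin : Tendsto (fun u : ℝ ↦ min |u| (Real.exp (-2))) (𝓝[≠] 0) (𝓝[>] 0) := by
    refine tendsto_nhdsWithin_iff.2 ⟨?_, ?_⟩
    · have hcont : Continuous fun u : ℝ ↦ min |u| (Real.exp (-2)) := by fun_prop
      simpa [(Real.exp_pos _).le] using (hcont.tendsto 0).mono_left nhdsWithin_le_nhds
    · filter_upwards [self_mem_nhdsWithin] with u hu
      exact lt_min (abs_pos.2 hu) (Real.exp_pos _)
  have hlog := Real.tendsto_log_nhdsGT_zero.comp hmin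
  exact (tendsto_neg_atBot_atTop.comp hlog).inv_tendsto_atTop.congr fun u ↦ (one_div _).symm

lemma continuous_derivF : Continuous derivF := by
  refine continuous_iff_continuousAt.2 fun u ↦ ?_
  rcases eq_or_ne u 0 with rfl | hu
  · rw [← continuousWithinAt_compl_self, ContinuousWithinAt, derivF_zero]
    exact tendsto_derivF_zero
  · have hpos : 0 < min |u| (Real.exp (-2)) := lt_min (abs_pos.2 hu) (Real.exp_pos _)
    have hlog : -Real.log (min |u| (Real.exp (-2))) ≠ 0 := by linarith [log_min_abs_exp_le hu]
    unfold derivF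
    fun_prop (disch := first | exact hpos.ne' | exact hlog)

lemma integral_one_div_neg_log {r : ℝ} (hr : 0 ≤ r) (hle : r ≤ Real.exp (-2)) :
    ∫ u in (0 : ℝ)..r, 1 / (-Real.log u) = ∫ u in (0 : ℝ)..r, derivF u := by
  refine intervalIntegral.integral_congr fun u hu ↦ ?_
  rw [uIcc_of_le hr] at hu
  exact (derivF_of_le hu.1 (hu.2.trans hle)).symm

lemma F_eq_integral_derivF {r : ℝ} (hr : 0 ≤ r) : F r = ∫ u in (0 : ℝ)..r, derivF u := by
  unfold F
  split_ifs with hle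
  · exact integral_one_div_neg_log hr hle
  · have hlinear : ∫ u in Real.exp (-2)..r, derivF u = 1 / 2 * (r - Real.exp (-2)) := by
      have hcongr : EqOn derivF (fun _ ↦ 1 / 2) (uIcc (Real.exp (-2)) r) := fun u hu ↦
        derivF_of_ge (uIcc_of_le (not_le.1 hle).le ▸ hu).1
      rw [intervalIntegral.integral_congr hcongr, intervalIntegral.integral_const, smul_eq_mul,
        mul_comm]
    rw [integral_one_div_neg_log (Real.exp_pos _).le le_rfl, ← hlinear,
      intervalIntegral.integral_add_adjacent_intervals] <;>
    exact continuous_derivF.intervalIntegrable _ _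

lemma hasDerivAt_F {r : ℝ} (hr : 0 < r) : HasDerivAt F (derivF r) r := by
  refine (continuous_derivF.integral_hasStrictDerivAt 0 r).hasDerivAt.congr_of_eventuallyEq ?_
  filter_upwards [Ioi_mem_nhds hr] with s hs using F_eq_integral_derivF (mem_Ioi.1 hs).le

lemma hasDerivWithinAt_F_zero : HasDerivWithinAt F 0 (Ici 0) 0 := by
  have := (continuous_derivF.integral_hasStrictDerivAt 0 0).hasDerivAt.hasDerivWithinAt (s := Ici 0)
  rw [derivF_zero] at this
  exact this.congr (fun r hr ↦ F_eq_integral_derivF hr) (F_eq_integral_derivF le_rfl)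

lemma F_zero_le {r : ℝ} (hr : 0 ≤ r) : F 0 ≤ F r := by
  rw [F_eq_integral_derivF le_rfl, F_eq_integral_derivF hr, intervalIntegral.integral_same]
  exact intervalIntegral.integral_nonneg hr fun u _ ↦ derivF_nonneg u

end Potential

lemma exists_continuousOn_smul_eq {E : Type*} [NormedAddCommGroup E] [InnerProductSpace ℝ E]
    {X : ℝ → E} {s : Set ℝ} {v : E} (hX : ContinuousOn X s) (hspan : ∀ t ∈ s, X t ∈ ℝ ∙ v) :
    ∃ ρ : ℝ → ℝ, ContinuousOn ρ s ∧ ∀ t ∈ s, X t = ρ t • v := by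
  refine ⟨fun t ↦ ⟪v, X t⟫_ℝ / ‖v‖ ^ 2, (continuousOn_const.inner hX).div_const _, fun t ht ↦ ?_⟩
  have hproj := Submodule.starProjection_singleton ℝ (v := v) (X t)
  rwa [Submodule.starProjection_eq_self_iff.2 (hspan t ht)] at hproj

end RadialFlow

open RadialFlow

theorem radial_flow_stays_on_ray_general {E : Type*} [NormedAddCommGroup E]
    [InnerProductSpace ℝ E] [CompleteSpace E] {φ γ : ℝ → ℝ}
    (hφ : ∀ r > 0, DifferentiableAt ℝ φ r) (hφ₀ : HasDerivWithinAt φ 0 (Ici 0) 0)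
    (hφmin : ∀ r ≥ 0, φ 0 ≤ φ r) (hγc : ContinuousOn γ (Ioi 0)) (hγ : ∀ t > 0, 0 ≤ γ t)
    {X X' X'' : ℝ → E} (hX₀ : X 0 ≠ 0) (hXcont : ContinuousOn X (Ici 0))
    (hX' : ∀ t > 0, HasDerivAt X (X' t) t) (hX'' : ∀ t > 0, HasDerivAt X' (X'' t) t)
    (hX'0 : Tendsto X' (𝓝[>] 0) (𝓝 0))
    (hODE : ∀ t > 0, X'' t + γ t • X' t + ∇ (fun x : E ↦ φ ‖x‖) (X t) = 0) :
    ∃ ρ : ℝ → ℝ, ContinuousOn ρ (Ici 0) ∧ ρ 0 = 1 ∧ ∀ t ≥ 0, X t = ρ t • X 0 := by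
  choose c hc using fun t ↦ exists_hasGradientAt_comp_norm_smul hφ hφ₀ (X t)
  have hmotion : IsDampedCentralMotion γ c (X 0) X X' :=
    { hasDerivAt_position := hX'
      hasDerivAt_velocity := fun t ht ↦ (hX'' t ht).congr_deriv <| eq_neg_of_add_eq_zero_left <| by
        rw [← (hc t).gradient, ← add_assoc, hODE t ht]
      tendsto_position := (hXcont 0 self_mem_Ici).mono_left (nhdsWithin_mono 0 Ioi_subset_Ici_self)
      tendsto_velocity := hX'0 }
  have hmin (x : E) : φ ‖(0 : E)‖ ≤ φ ‖x‖ := by simpa using hφmin ‖x‖ (norm_nonneg x)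
  have hne (t : ℝ) (ht : t > 0) : ‖X t‖ ^ 2 + ‖X' t‖ ^ 2 ≠ 0 :=
    hmotion.norm_sq_add_norm_sq_ne_zero hγc hγ hmin (fun s _ ↦ hc s) hX₀ ht
  have hspan (t : ℝ) (ht : t ∈ Ici 0) : X t ∈ ℝ ∙ X 0 := by
    rcases (mem_Ici.1 ht).eq_or_lt with rfl | hpos
    · exact Submodule.mem_span_singleton_self _
    · exact hmotion.mem_span_initial hγ hX₀ hne hpos
  obtain ⟨ρ, hρ, hXρ⟩ := exists_continuousOn_smul_eq hXcont hspan
  exact ⟨ρ, hρ, smul_left_injective ℝ hX₀ (by simpa using (hXρ 0 self_mem_Ici).symm), hXρ⟩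

/-- for the radial potential `g(x) = F(‖x‖)`, any solution of the Nesterov
flow starting at `X₀ ≠ 0` (with zero initial velocity) stays on the ray through `X₀`:
there is a continuous `ρ : [0,∞) → ℝ` with `ρ(0) = 1` and `X(t) = ρ(t)·X₀` for `t ≥ 0`. -/
theorem radial_flow_stays_on_ray
    (X₀ : EuclideanSpace ℝ (Fin 2)) (hX₀ : X₀ ≠ 0)
    (X X' X'' : ℝ → EuclideanSpace ℝ (Fin 2))
    (hXcont : ContinuousOn X (Set.Ici 0))
    (hX' : ∀ t > (0:ℝ), HasDerivAt X (X' t) t)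
    (hX'' : ∀ t > (0:ℝ), HasDerivAt X' (X'' t) t)
    (hX''cont : ContinuousOn X'' (Set.Ioi 0))
    (hX0 : X 0 = X₀)
    (hX'0 : Filter.Tendsto X' (nhdsWithin 0 (Set.Ioi 0)) (nhds 0))
    (hODE : ∀ t > (0:ℝ), X'' t + (3 / t) • X' t + gradient gRad (X t) = 0) :
    ∃ ρ : ℝ → ℝ, ContinuousOn ρ (Set.Ici 0) ∧ ρ 0 = 1 ∧
      ∀ t ≥ (0:ℝ), X t = ρ t • X₀ := by
  subst hX0
  exact radial_flow_stays_on_ray_general (fun r hr ↦ (hasDerivAt_F hr).differentiableAt)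
    hasDerivWithinAt_F_zero (fun _ ↦ F_zero_le) (γ := fun t ↦ 3 / t)
    (continuousOn_const.div continuousOn_id fun _ ht ↦ (mem_Ioi.1 ht).ne')
    (fun _ ht ↦ (div_pos three_pos ht).le) hX₀ hXcont hX' hX'' hX'0 hODE
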